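/- Let S and A be nonempty finite types, P : S → A → PMF S a transition kernel, ρ0 a probability distribution on S, and γ ∈ [0,1). Let π and π' be policies, let σ ≥ 0, let R_e : S × A → ℝ be a reward function, g : S × A → ℝ any function and δ ∈ ℝ, and set R(s,a) = R_e(s,a) + σ · min{g(s,a) − δ, 0}. Let A^π_R(s,a) = Q^π_R(s,a) − V^π_R(s) be the advantage function of π computed with the total reward R, and set ε^{π'} = max_s |Σ_a π'(a|s) A^π_R(s,a)|. Then J_R(π') − J_R(π) ≥ (1/(1−γ)) · Σ_s d^π(s) Σ_a π'(a|s) [A^π_R(s,a) − (2γ ε^{π'}/(1−γ)) D_TV(π'‖π)[s]]. -/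

import Mathlib

open scoped BigOperators

section MDPdefs

variable {S A : Type*} [Fintype S] [Fintype A]

/-- The state-marginal distribution at time `t` under policy `π`:
`ρ_0 = ρ0` and `ρ_{t+1}(s') = ∑_s ∑_a ρ_t(s) π(a|s) P(s'|s,a)`. -/
noncomputable def stateMarginal (P : S → A → PMF S) (ρ0 : PMF S) (π : S → PMF A) :
    ℕ → S → ℝ
  | 0, s => (ρ0 s).toReal
  | t + 1, s' => ∑ s : S, ∑ a : A,
      stateMarginal P ρ0 π t s * (π s a).toReal * (P s a s').toReal

/-- The discounted state visitation distribution `d^π(s) = (1-γ) ∑_t γ^t ρ_t^π(s)`. -/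
noncomputable def dVisit (P : S → A → PMF S) (ρ0 : PMF S) (γ : ℝ) (π : S → PMF A)
    (s : S) : ℝ :=
  (1 - γ) * ∑' t : ℕ, γ ^ t * stateMarginal P ρ0 π t s

/-- The discounted return `J_R(π) = ∑_t γ^t ∑_s ∑_a ρ_t^π(s) π(a|s) R(s,a)`. -/
noncomputable def Jret (P : S → A → PMF S) (ρ0 : PMF S) (γ : ℝ) (π : S → PMF A)
    (R : S → A → ℝ) : ℝ :=
  ∑' t : ℕ, γ ^ t * ∑ s : S, ∑ a : A,
      stateMarginal P ρ0 π t s * (π s a).toReal * R s a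

/-- Total variational divergence between the action distributions of two policies at `s`. -/
noncomputable def dTV (π' π : S → PMF A) (s : S) : ℝ :=
  (1 / 2) * ∑ a : A, |(π' s a).toReal - (π s a).toReal|

/-- Value function of `π` with reward `R`: expected discounted return started at `s`. -/
noncomputable def Vval (P : S → A → PMF S) (γ : ℝ) (π : S → PMF A) (R : S → A → ℝ)
    (s : S) : ℝ :=
  Jret P (PMF.pure s) γ π R

/-- State-action value function `Q^π_R(s,a) = R(s,a) + γ ∑_{s'} P(s'|s,a) V^π_R(s')`. -/
noncomputable def Qval (P : S → A → PMF S) (γ : ℝ) (π : S → PMF A) (R : S → A → ℝ)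
    (s : S) (a : A) : ℝ :=
  R s a + γ * ∑ s' : S, (P s a s').toReal * Vval P γ π R s'

/-- Advantage function `A^π_R(s,a) = Q^π_R(s,a) - V^π_R(s)`. -/
noncomputable def Aadv (P : S → A → PMF S) (γ : ℝ) (π : S → PMF A) (R : S → A → ℝ)
    (s : S) (a : A) : ℝ :=
  Qval P γ π R s a - Vval P γ π R s

/-- Kullback–Leibler divergence between the action distributions at state `s`. -/
noncomputable def dKL (π' π : S → PMF A) (s : S) : ℝ :=
  ∑ a : A, (π' s a).toReal * Real.log ((π' s a).toReal / (π s a).toReal)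

end MDPdefs


section helpers

variable {S A : Type*} [Fintype S] [Fintype A]

lemma pmf_sum_toReal {B : Type*} [Fintype B] (p : PMF B) : ∑ b, (p b).toReal = 1 := by
  rw [← ENNReal.toReal_sum (fun b _ => p.apply_ne_top b)]
  have h := p.tsum_coe
  rw [tsum_fintype] at h
  simp [h]

lemma sm_nonneg (P : S → A → PMF S) (ρ0 : PMF S) (π : S → PMF A) (t : ℕ) (s : S) :
    0 ≤ stateMarginal P ρ0 π t s := by
  induction t generalizing s with
  | zero => simp [stateMarginal]
  | succ t ih =>
    simp only [stateMarginal]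
    refine Finset.sum_nonneg fun s _ => Finset.sum_nonneg fun a _ => ?_
    have := ih s
    positivity

lemma sum_K (P : S → A → PMF S) (π : S → PMF A) (s : S) :
    ∑ s', ∑ a, (π s a).toReal * (P s a s').toReal = 1 := by
  rw [Finset.sum_comm]
  simp [← Finset.mul_sum, pmf_sum_toReal]

lemma sm_succ (P : S → A → PMF S) (ρ0 : PMF S) (π : S → PMF A) (t : ℕ) (s' : S) :
    stateMarginal P ρ0 π (t+1) s' =
      ∑ s, stateMarginal P ρ0 π t s * ∑ a, (π s a).toReal * (P s a s').toReal := by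
  simp only [stateMarginal, Finset.mul_sum, mul_assoc]

lemma sm_sum (P : S → A → PMF S) (ρ0 : PMF S) (π : S → PMF A) (t : ℕ) :
    ∑ s, stateMarginal P ρ0 π t s = 1 := by
  induction t with
  | zero => simp [stateMarginal, pmf_sum_toReal]
  | succ t ih =>
    simp only [sm_succ]
    rw [Finset.sum_comm]
    simp [← Finset.mul_sum, sum_K, ih]

lemma sm_le_one (P : S → A → PMF S) (ρ0 : PMF S) (π : S → PMF A) (t : ℕ) (s : S) :
    stateMarginal P ρ0 π t s ≤ 1 := by
  rw [← sm_sum P ρ0 π t]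
  exact Finset.single_le_sum (f := fun s => stateMarginal P ρ0 π t s)
    (fun i _ => sm_nonneg P ρ0 π t i) (Finset.mem_univ s)

lemma sm_summable (P : S → A → PMF S) (ρ0 : PMF S) (π : S → PMF A) {γ : ℝ} (h0 : 0 ≤ γ)
    (h1 : γ < 1) (s : S) : Summable fun t : ℕ => γ ^ t * stateMarginal P ρ0 π t s := by
  refine Summable.of_nonneg_of_le (fun t => ?_) (fun t => ?_) (summable_geometric_of_lt_one h0 h1)
  · have := sm_nonneg P ρ0 π t s
    positivity
  · exact mul_le_of_le_one_right (by positivity) (sm_le_one P ρ0 π t s)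

noncomputable def xv (P : S → A → PMF S) (ρ0 : PMF S) (γ : ℝ) (π : S → PMF A) (s : S) : ℝ :=
  ∑' t : ℕ, γ ^ t * stateMarginal P ρ0 π t s

lemma xv_nonneg (P : S → A → PMF S) (ρ0 : PMF S) (π : S → PMF A) {γ : ℝ} (h0 : 0 ≤ γ) (s : S) :
    0 ≤ xv P ρ0 γ π s := by
  refine tsum_nonneg fun t => ?_
  have := sm_nonneg P ρ0 π t s
  positivity

lemma xv_flow (P : S → A → PMF S) (ρ0 : PMF S) (π : S → PMF A) {γ : ℝ} (h0 : 0 ≤ γ)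
    (h1 : γ < 1) (s' : S) : xv P ρ0 γ π s' = (ρ0 s').toReal +
      γ * ∑ s, xv P ρ0 γ π s * ∑ a, (π s a).toReal * (P s a s').toReal := by
  have hs := fun s => sm_summable P ρ0 π h0 h1 s
  unfold xv
  rw [(hs s').tsum_eq_zero_add]
  simp only [pow_zero, one_mul, stateMarginal.eq_1]
  congr 1
  simp only [← tsum_mul_right]
  rw [← Summable.tsum_finsetSum (fun s _ => (hs s).mul_right _), ← tsum_mul_left]
  refine tsum_congr fun t => ?_
  rw [sm_succ, Finset.mul_sum, Finset.mul_sum]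
  refine Finset.sum_congr rfl fun s _ => ?_
  ring

lemma Jret_eq (P : S → A → PMF S) (ρ0 : PMF S) (π : S → PMF A) (R : S → A → ℝ) {γ : ℝ}
    (h0 : 0 ≤ γ) (h1 : γ < 1) :
    Jret P ρ0 γ π R = ∑ s, xv P ρ0 γ π s * ∑ a, (π s a).toReal * R s a := by
  have hs := fun s => sm_summable P ρ0 π h0 h1 s
  unfold Jret xv
  simp only [← tsum_mul_right]
  rw [← Summable.tsum_finsetSum (fun s _ => (hs s).mul_right _)]
  refine tsum_congr fun t => ?_
  rw [Finset.mul_sum]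
  refine Finset.sum_congr rfl fun s _ => ?_
  simp only [Finset.mul_sum]
  refine Finset.sum_congr rfl fun a _ => ?_
  ring

lemma sm_lin (P : S → A → PMF S) (ρ0 : PMF S) (π : S → PMF A) (t : ℕ) (s : S) :
    stateMarginal P ρ0 π t s =
      ∑ i, (ρ0 i).toReal * stateMarginal P (PMF.pure i) π t s := by
  classical
  induction t generalizing s with
  | zero => 
    simp only [stateMarginal, PMF.pure_apply]
    rw [Finset.sum_eq_single s] <;> simp +contextual [eq_comm]
  | succ t ih =>
    simp only [sm_succ, Finset.mul_sum (s := (Finset.univ : Finset S))]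
    rw [Finset.sum_comm]
    refine Finset.sum_congr rfl fun j _ => ?_
    rw [ih j, Finset.sum_mul]
    refine Finset.sum_congr rfl fun a _ => ?_
    ring

lemma Jret_V (P : S → A → PMF S) (ρ0 : PMF S) (π : S → PMF A) (R : S → A → ℝ) {γ : ℝ}
    (h0 : 0 ≤ γ) (h1 : γ < 1) :
    Jret P ρ0 γ π R = ∑ s, (ρ0 s).toReal * Vval P γ π R s := by
  have hx : ∀ s, xv P ρ0 γ π s = ∑ i, (ρ0 i).toReal * xv P (PMF.pure i) γ π s := by
    intro s
    unfold xv
    simp only [← tsum_mul_left]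
    rw [← Summable.tsum_finsetSum
      (fun i _ => (sm_summable P (PMF.pure i) π h0 h1 s).mul_left _)]
    refine tsum_congr fun t => ?_
    rw [sm_lin, Finset.mul_sum]
    refine Finset.sum_congr rfl fun s _ => ?_
    ring
  unfold Vval
  simp only [Jret_eq P _ π R h0 h1]
  simp only [hx, Finset.sum_mul (s := (Finset.univ : Finset S))]
  rw [Finset.sum_comm]
  refine Finset.sum_congr rfl fun i _ => ?_
  rw [Finset.mul_sum]
  refine Finset.sum_congr rfl fun s _ => ?_
  ring

lemma pdl (P : S → A → PMF S) (ρ0 : PMF S) (π π' : S → PMF A) (R : S → A → ℝ) {γ : ℝ}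
    (h0 : 0 ≤ γ) (h1 : γ < 1) :
    Jret P ρ0 γ π' R - Jret P ρ0 γ π R =
      ∑ s, xv P ρ0 γ π' s * ∑ a, (π' s a).toReal * Aadv P γ π R s a := by
  rw [Jret_V P ρ0 π R h0 h1, Jret_eq P ρ0 π' R h0 h1]
  set V := Vval P γ π R with hV
  have hA : ∀ s, ∑ a, (π' s a).toReal * Aadv P γ π R s a =
      ∑ a, (π' s a).toReal * R s a
        + γ * ∑ s', (∑ a, (π' s a).toReal * (P s a s').toReal) * V s' - V s := by
    intro s
    simp only [Aadv, Qval, ← hV, mul_sub, mul_add, Finset.sum_sub_distrib, Finset.sum_add_distrib,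
      ← Finset.sum_mul, pmf_sum_toReal, one_mul]
    congr 2
    simp only [Finset.mul_sum, Finset.sum_mul]
    rw [Finset.sum_comm]
    refine Finset.sum_congr rfl fun i _ => Finset.sum_congr rfl fun a _ => ?_
    ring
  have h2 : ∑ s, xv P ρ0 γ π' s * V s = ∑ s, (ρ0 s).toReal * V s +
      ∑ s, xv P ρ0 γ π' s * (γ * ∑ s', (∑ a, (π' s a).toReal * (P s a s').toReal) * V s') := by
    conv_lhs => enter [2, s]; rw [xv_flow P ρ0 π' h0 h1 s, add_mul]
    rw [Finset.sum_add_distrib]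
    congr 1
    simp only [Finset.mul_sum (s := (Finset.univ : Finset S)),
      Finset.sum_mul (s := (Finset.univ : Finset S))]
    rw [Finset.sum_comm]
    refine Finset.sum_congr rfl fun i _ => Finset.sum_congr rfl fun a _ => ?_
    ring
  simp only [hA, mul_sub, mul_add, Finset.sum_sub_distrib, Finset.sum_add_distrib, h2]
  ring

lemma l1_bound (P : S → A → PMF S) (ρ0 : PMF S) (π π' : S → PMF A) {γ : ℝ}
    (h0 : 0 ≤ γ) (h1 : γ < 1) :
    (1 - γ) * ∑ s, |xv P ρ0 γ π' s - xv P ρ0 γ π s| ≤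
      2 * γ * ∑ s, xv P ρ0 γ π s * dTV π' π s := by
  set x := xv P ρ0 γ π with hx
  set x' := xv P ρ0 γ π' with hx'
  have key : ∀ s', |x' s' - x s'| ≤
      γ * ∑ s, |x' s - x s| * ∑ a, (π' s a).toReal * (P s a s').toReal +
      γ * ∑ s, x s * ∑ a, |(π' s a).toReal - (π s a).toReal| * (P s a s').toReal := by
    intro s'
    have e : x' s' - x s' =
        γ * ∑ s, (x' s - x s) * ∑ a, (π' s a).toReal * (P s a s').toReal +
        γ * ∑ s, x s * ∑ a, ((π' s a).toReal - (π s a).toReal) * (P s a s').toReal := by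
      rw [hx, hx', xv_flow P ρ0 π h0 h1 s', xv_flow P ρ0 π' h0 h1 s', ← hx, ← hx']
      simp only [sub_mul, mul_sub, Finset.sum_sub_distrib]
      ring
    rw [e]
    refine (abs_add_le _ _).trans ?_
    rw [abs_mul, abs_mul, abs_of_nonneg h0]
    gcongr
    · refine (Finset.abs_sum_le_sum_abs _ _).trans (Finset.sum_le_sum fun s _ => ?_)
      rw [abs_mul, abs_of_nonneg (a := ∑ a, (π' s a).toReal * (P s a s').toReal)]
      exact Finset.sum_nonneg fun a _ => by positivity
    · refine (Finset.abs_sum_le_sum_abs _ _).trans (Finset.sum_le_sum fun s _ => ?_)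
      have hxn : 0 ≤ x s := xv_nonneg P ρ0 π h0 s
      rw [abs_mul, abs_of_nonneg hxn]
      refine mul_le_mul_of_nonneg_left ?_ hxn
      refine (Finset.abs_sum_le_sum_abs _ _).trans (Finset.sum_le_sum fun a _ => ?_)
      rw [abs_mul, abs_of_nonneg (a := (P s a s').toReal) (by positivity)]
  have tot := Finset.sum_le_sum fun s' (_ : s' ∈ (Finset.univ : Finset S)) => key s'
  rw [Finset.sum_add_distrib, ← Finset.mul_sum, ← Finset.mul_sum, Finset.sum_comm] at tot
  simp only [← Finset.mul_sum, sum_K, mul_one] at tot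
  have e2 : ∑ s', ∑ s, x s * ∑ a, |(π' s a).toReal - (π s a).toReal| * (P s a s').toReal =
      2 * ∑ s, x s * dTV π' π s := by
    rw [Finset.sum_comm, Finset.mul_sum]
    refine Finset.sum_congr rfl fun s _ => ?_
    rw [← Finset.mul_sum, Finset.sum_comm]
    simp only [← Finset.mul_sum, pmf_sum_toReal, mul_one, dTV]
    ring
  rw [e2] at tot
  linarith

end helpers

/-- Corollary 1: worst-case approximation error bound in terms of the advantage
function computed with the total reward `R = R_e + σ·min{g - δ, 0}`. -/
theorem tace_corollary_one
    {S A : Type*} [Fintype S] [Fintype A] [Nonempty S] [Nonempty A]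
    (P : S → A → PMF S) (ρ0 : PMF S) (γ : ℝ) (hγ0 : 0 ≤ γ) (hγ1 : γ < 1)
    (π π' : S → PMF A) (σ : ℝ) (hσ : 0 ≤ σ) (Re g : S → A → ℝ) (δ : ℝ) :
    let R : S → A → ℝ := fun s a => Re s a + σ * min (g s a - δ) 0
    let ε : ℝ := ⨆ s : S, |∑ a : A, (π' s a).toReal * Aadv P γ π R s a|
    Jret P ρ0 γ π' R - Jret P ρ0 γ π R ≥
      (1 / (1 - γ)) * ∑ s : S, dVisit P ρ0 γ π s * ∑ a : A, (π' s a).toReal *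
        (Aadv P γ π R s a - (2 * γ * ε / (1 - γ)) * dTV π' π s) := by
  intro R ε
  have hd : 0 < 1 - γ := by linarith
  rw [ge_iff_le, pdl P ρ0 π π' R hγ0 hγ1]
  set f : S → ℝ := fun s => ∑ a : A, (π' s a).toReal * Aadv P γ π R s a with hf
  have hε : ∀ s, |f s| ≤ ε := fun s => le_ciSup (f := fun s => |f s|) (Set.finite_range _).bddAbove s
  have hε0 : 0 ≤ ε := (abs_nonneg _).trans (hε (Classical.arbitrary S))
  have hR : (1 / (1 - γ)) * ∑ s : S, dVisit P ρ0 γ π s * ∑ a : A, (π' s a).toReal *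
        (Aadv P γ π R s a - (2 * γ * ε / (1 - γ)) * dTV π' π s) =
      ∑ s, xv P ρ0 γ π s * f s -
        ε * ((2 * γ * ∑ s, xv P ρ0 γ π s * dTV π' π s) / (1 - γ)) := by
    simp only [mul_sub, Finset.sum_sub_distrib, ← Finset.sum_mul, pmf_sum_toReal, one_mul]
    have h1 : ∀ s, dVisit P ρ0 γ π s = (1 - γ) * xv P ρ0 γ π s := fun s => rfl
    simp only [h1, mul_assoc, ← Finset.mul_sum]
    have h2 : ∑ s, xv P ρ0 γ π s * (2 * (γ * ε) / (1 - γ) * dTV π' π s) =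
        2 * (γ * ε) / (1 - γ) * ∑ s, xv P ρ0 γ π s * dTV π' π s := by
      rw [Finset.mul_sum]
      exact Finset.sum_congr rfl fun s _ => by ring
    rw [h2]
    field_simp
    simp only [hf]
  rw [hR]
  have hb := l1_bound P ρ0 π π' hγ0 hγ1
  have hb2 : ∑ s, |xv P ρ0 γ π' s - xv P ρ0 γ π s| ≤
      (2 * γ * ∑ s, xv P ρ0 γ π s * dTV π' π s) / (1 - γ) := by
    rw [le_div_iff₀ hd]
    linarith
  have hb3 := mul_le_mul_of_nonneg_left hb2 hε0
  have hb4 : ∑ s, xv P ρ0 γ π s * f s - ∑ s, xv P ρ0 γ π' s * f s ≤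
      ε * ∑ s, |xv P ρ0 γ π' s - xv P ρ0 γ π s| := by
    rw [← Finset.sum_sub_distrib, Finset.mul_sum]
    refine Finset.sum_le_sum fun s _ => ?_
    rw [← sub_mul]
    refine (le_abs_self _).trans ?_
    rw [abs_mul, abs_sub_comm, mul_comm]
    exact mul_le_mul_of_nonneg_right (hε s) (abs_nonneg _)
  change _ ≤ ∑ s, xv P ρ0 γ π' s * f s
  linarith
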